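/- arXiv:2408.04291 — 8 statements merged into one kernel-verified Lean document; each statement's English description precedes it below -/
import Mathlib

section
/- Fix m in the probability simplex ℙ ⊆ ℝ^s. Suppose that for every i,j, the map P ↦ c_{ij}(m,P) is convex on the set of row-stochastic s×s matrices, and that the monotonicity condition holds: for all row-stochastic P¹, P², Σ_{i,j} (c_{ij}(m,P¹) − c_{ij}(m,P²))(P¹_{ij} − P²_{ij}) m_i ≥ 0. Then the function g(P) = Σ_{i,j} c_{ij}(m,P) m_i P_{ij} is convex on the set of row-stochastic s×s matrices: for all row-stochastic P¹, P² and all α ∈ (0,1), g(αP¹ + (1−α)P²) ≤ α g(P¹) + (1−α) g(P²). -/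
/-!
With `cₖ = c i j Pₖ`, `pₖ = Pₖ i j`, convexity of `c i j` and nonnegativity of
`m i * (α p₁ + (1 - α) p₂)` bound each summand at the convex combination by
`m i * (α c₁ + (1 - α) c₂) * (α p₁ + (1 - α) p₂)`, and
`(α c₁ + (1 - α) c₂) (α p₁ + (1 - α) p₂)
  = α c₁ p₁ + (1 - α) c₂ p₂ - α (1 - α) (c₁ - c₂) (p₁ - p₂)`.
Summed against `m i`, the last term is nonpositive by monotonicity.
-/

open Finset

/-- `m` lies in the probability simplex ℙ ⊆ ℝ^s. -/
def IsSimplex {s : ℕ} (m : Fin s → ℝ) : Prop :=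
  (∀ i, 0 ≤ m i) ∧ ∑ i, m i = 1

/-- `P` is a row-stochastic s×s matrix (each row in the simplex). -/
def RowStochastic {s : ℕ} (P : Fin s → Fin s → ℝ) : Prop :=
  (∀ i j, 0 ≤ P i j) ∧ ∀ i, ∑ j, P i j = 1

theorem convexity_of_social_running_cost (s : ℕ) (hs : 1 ≤ s)
    (m : Fin s → ℝ) (hm : IsSimplex m)
    (c : Fin s → Fin s → (Fin s → Fin s → ℝ) → ℝ)
    (hconv : ∀ i j, ConvexOn ℝ {P : Fin s → Fin s → ℝ | RowStochastic P} (c i j))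
    (hmono : ∀ P₁ P₂ : Fin s → Fin s → ℝ, RowStochastic P₁ → RowStochastic P₂ →
      0 ≤ ∑ i, ∑ j, (c i j P₁ - c i j P₂) * (P₁ i j - P₂ i j) * m i) :
    ∀ P₁ P₂ : Fin s → Fin s → ℝ, RowStochastic P₁ → RowStochastic P₂ →
      ∀ α : ℝ, α ∈ Set.Ioo (0 : ℝ) 1 →
        (∑ i, ∑ j, c i j (fun p q => α * P₁ p q + (1 - α) * P₂ p q) * m i *
            (α * P₁ i j + (1 - α) * P₂ i j)) ≤
          α * (∑ i, ∑ j, c i j P₁ * m i * P₁ i j) +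
            (1 - α) * (∑ i, ∑ j, c i j P₂ * m i * P₂ i j) := by
  intro P₁ P₂ h₁ h₂ α hα
  obtain ⟨hα0, hα1⟩ := hα
  have hβ0 : 0 < 1 - α := by linarith
  have key : ∀ i j, c i j (fun p q => α * P₁ p q + (1 - α) * P₂ p q) * m i *
        (α * P₁ i j + (1 - α) * P₂ i j) ≤
      α * (c i j P₁ * m i * P₁ i j) + (1 - α) * (c i j P₂ * m i * P₂ i j) -
        α * (1 - α) * ((c i j P₁ - c i j P₂) * (P₁ i j - P₂ i j) * m i) := by
    intro i j
    have hc : c i j (fun p q => α * P₁ p q + (1 - α) * P₂ p q) ≤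
        α * c i j P₁ + (1 - α) * c i j P₂ :=
      (hconv i j).2 h₁ h₂ hα0.le hβ0.le (by ring)
    have hw : 0 ≤ m i * (α * P₁ i j + (1 - α) * P₂ i j) :=
      mul_nonneg (hm.1 i) (add_nonneg (mul_nonneg hα0.le (h₁.1 i j))
        (mul_nonneg hβ0.le (h₂.1 i j)))
    linear_combination mul_le_mul_of_nonneg_right hc hw
  have hsum := Finset.sum_le_sum fun i (_ : i ∈ Finset.univ) =>
    Finset.sum_le_sum fun j (_ : j ∈ Finset.univ) => key i j
  simp only [Finset.sum_add_distrib, Finset.sum_sub_distrib, ← Finset.mul_sum] at hsum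
  have hgap := mul_nonneg (mul_pos hα0 hβ0).le (hmono P₁ P₂ h₁ h₂)
  linarith
end

section
/- Fix m in the probability simplex ℙ ⊆ ℝ^s. Suppose that for every i,j, the map P ↦ c_{ij}(m,P) is convex on the set of row-stochastic s×s matrices, and that the strict monotonicity condition holds: for all row-stochastic P¹ ≠ P², Σ_{i,j} (c_{ij}(m,P¹) − c_{ij}(m,P²))(P¹_{ij} − P²_{ij}) m_i > 0. Then the function g(P) = Σ_{i,j} c_{ij}(m,P) m_i P_{ij} is strictly convex on the set of row-stochastic s×s matrices: for all row-stochastic P¹ ≠ P² and all α ∈ (0,1), g(αP¹ + (1−α)P²) < α g(P¹) + (1−α) g(P²). -/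
/-!
Write `Q = α P₁ + (1 - α) P₂`. Convexity of each `c i j`, weighted by `m i * Q i j ≥ 0`, bounds
`g(Q)` by `∑ (α c(P₁) + (1 - α) c(P₂)) m Q`. The algebraic identity
`α a x + (1 - α) b y - (α a + (1 - α) b) (α x + (1 - α) y) = α (1 - α) (a - b) (x - y)`
shows that this bound falls short of `α g(P₁) + (1 - α) g(P₂)` by exactly `α (1 - α)` times the
monotonicity sum, which is positive.
-/


open Finset

theorem strict_convexity_of_social_running_cost (s : ℕ) (hs : 1 ≤ s)
    (m : Fin s → ℝ) (hm : IsSimplex m)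
    (c : Fin s → Fin s → (Fin s → Fin s → ℝ) → ℝ)
    (hconv : ∀ i j, ConvexOn ℝ {P : Fin s → Fin s → ℝ | RowStochastic P} (c i j))
    (hmono : ∀ P₁ P₂ : Fin s → Fin s → ℝ, RowStochastic P₁ → RowStochastic P₂ →
      P₁ ≠ P₂ →
      0 < ∑ i, ∑ j, (c i j P₁ - c i j P₂) * (P₁ i j - P₂ i j) * m i) :
    ∀ P₁ P₂ : Fin s → Fin s → ℝ, RowStochastic P₁ → RowStochastic P₂ →
      P₁ ≠ P₂ →
      ∀ α : ℝ, α ∈ Set.Ioo (0 : ℝ) 1 →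
        (∑ i, ∑ j, c i j (fun p q => α * P₁ p q + (1 - α) * P₂ p q) * m i *
            (α * P₁ i j + (1 - α) * P₂ i j)) <
          α * (∑ i, ∑ j, c i j P₁ * m i * P₁ i j) +
            (1 - α) * (∑ i, ∑ j, c i j P₂ * m i * P₂ i j) := by
  intro P₁ P₂ h₁ h₂ hne α hα
  obtain ⟨hα0, hα1⟩ := hα
  have hβ0 : 0 < 1 - α := sub_pos.mpr hα1
  have hgap := mul_pos (mul_pos hα0 hβ0) (hmono P₁ P₂ h₁ h₂ hne)
  have hle : (∑ i, ∑ j, c i j (fun p q => α * P₁ p q + (1 - α) * P₂ p q) * m i *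
        (α * P₁ i j + (1 - α) * P₂ i j)) ≤
      ∑ i, ∑ j, (α * c i j P₁ + (1 - α) * c i j P₂) * m i *
        (α * P₁ i j + (1 - α) * P₂ i j) := by
    refine Finset.sum_le_sum fun i _ => Finset.sum_le_sum fun j _ => ?_
    have hc : c i j (fun p q => α * P₁ p q + (1 - α) * P₂ p q) ≤
        α * c i j P₁ + (1 - α) * c i j P₂ :=
      (hconv i j).2 h₁ h₂ hα0.le hβ0.le (by ring)
    have hQ : 0 ≤ α * P₁ i j + (1 - α) * P₂ i j :=
      add_nonneg (mul_nonneg hα0.le (h₁.1 i j)) (mul_nonneg hβ0.le (h₂.1 i j))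
    exact mul_le_mul_of_nonneg_right (mul_le_mul_of_nonneg_right hc (hm.1 i)) hQ
  have hid : α * (∑ i, ∑ j, c i j P₁ * m i * P₁ i j) +
        (1 - α) * (∑ i, ∑ j, c i j P₂ * m i * P₂ i j) =
      (∑ i, ∑ j, (α * c i j P₁ + (1 - α) * c i j P₂) * m i *
        (α * P₁ i j + (1 - α) * P₂ i j)) +
      α * (1 - α) * ∑ i, ∑ j, (c i j P₁ - c i j P₂) * (P₁ i j - P₂ i j) * m i := by
    simp only [Finset.mul_sum, ← Finset.sum_add_distrib]
    refine Finset.sum_congr rfl fun i _ => Finset.sum_congr rfl fun j _ => ?_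
    ring
  linarith
end

section
/- (Theorem 3.1, uniqueness) Fix m in the probability simplex ℙ ⊆ ℝ^s and U ∈ ℝ^s. Suppose that for every i,j, the map P ↦ c_{ij}(m,P) is convex and continuous on the set of row-stochastic s×s matrices, and that the strict monotonicity condition holds: for all row-stochastic P¹ ≠ P², Σ_{i,j} (c_{ij}(m,P¹) − c_{ij}(m,P²))(P¹_{ij} − P²_{ij}) m_i > 0. Then the minimizer of H(m,P,U) over row-stochastic matrices P is unique: if P̂¹ and P̂² both attain the minimum, then P̂¹ = P̂². -/
/-!
Two distinct minimizers are excluded by evaluating the social cost at their midpoint. Convexity of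
each `c i j m`, together with nonnegativity of the weights `m i * P i j`, bounds the cost there by
the average of the two costs minus a quarter of the monotonicity form, which is strictly positive.
-/

open Finset

/-- Social cost H(m,P,U) = Σ_{i,j} c_{ij}(m,P) m_i P_{ij} + Σ_{i,j} U_j m_i P_{ij}. -/
def socialCost {s : ℕ}
    (c : Fin s → Fin s → (Fin s → ℝ) → (Fin s → Fin s → ℝ) → ℝ)
    (m : Fin s → ℝ) (P : Fin s → Fin s → ℝ) (U : Fin s → ℝ) : ℝ :=
  ∑ i, ∑ j, c i j m P * m i * P i j + ∑ i, ∑ j, U j * m i * P i j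

theorem uniqueness_of_minimizer_of_social_cost (s : ℕ) (hs : 1 ≤ s)
    (m : Fin s → ℝ) (hm : IsSimplex m) (U : Fin s → ℝ)
    (c : Fin s → Fin s → (Fin s → ℝ) → (Fin s → Fin s → ℝ) → ℝ)
    (hconv : ∀ i j, ConvexOn ℝ {P : Fin s → Fin s → ℝ | RowStochastic P} (c i j m))
    (hcont : ∀ i j, ContinuousOn (c i j m) {P : Fin s → Fin s → ℝ | RowStochastic P})
    (hmono : ∀ P₁ P₂ : Fin s → Fin s → ℝ, RowStochastic P₁ → RowStochastic P₂ →
      P₁ ≠ P₂ →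
      0 < ∑ i, ∑ j, (c i j m P₁ - c i j m P₂) * (P₁ i j - P₂ i j) * m i)
    (Phat₁ Phat₂ : Fin s → Fin s → ℝ)
    (hP₁ : RowStochastic Phat₁) (hP₂ : RowStochastic Phat₂)
    (hmin₁ : ∀ P : Fin s → Fin s → ℝ, RowStochastic P →
      socialCost c m Phat₁ U ≤ socialCost c m P U)
    (hmin₂ : ∀ P : Fin s → Fin s → ℝ, RowStochastic P →
      socialCost c m Phat₂ U ≤ socialCost c m P U) :
    Phat₁ = Phat₂ := by
  by_contra hne
  set Q : Fin s → Fin s → ℝ := fun i j => (Phat₁ i j + Phat₂ i j) / 2 with hQ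
  have hQeq : Q = (1 / 2 : ℝ) • Phat₁ + (1 / 2 : ℝ) • Phat₂ := by
    funext i j
    simp only [hQ, Pi.add_apply, Pi.smul_apply, smul_eq_mul]
    ring
  have hQnn : ∀ i j, 0 ≤ Q i j := fun i j => by
    have h1 := hP₁.1 i j
    have h2 := hP₂.1 i j
    simp only [hQ]
    linarith
  have hQs : RowStochastic Q := by
    refine ⟨hQnn, fun i => ?_⟩
    simp only [hQ]
    rw [← Finset.sum_div, Finset.sum_add_distrib, hP₁.2 i, hP₂.2 i]
    norm_num
  have hcQ : ∀ i j, c i j m Q ≤ (c i j m Phat₁ + c i j m Phat₂) / 2 := fun i j => by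
    have h := (hconv i j).2 hP₁ hP₂ (by norm_num : (0 : ℝ) ≤ 1 / 2)
      (by norm_num : (0 : ℝ) ≤ 1 / 2) (by norm_num)
    rw [← hQeq] at h
    simp only [smul_eq_mul] at h
    linarith
  -- The defect of midpoint convexity is a quarter of the monotonicity form, since
  -- `(a + b) * (p + q) / 4 = (a * p + b * q) / 2 - (a - b) * (p - q) / 4`.
  have key : socialCost c m Q U ≤ (socialCost c m Phat₁ U + socialCost c m Phat₂ U) / 2
      - (∑ i, ∑ j, (c i j m Phat₁ - c i j m Phat₂) * (Phat₁ i j - Phat₂ i j) * m i) / 4 := by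
    simp only [socialCost, ← Finset.sum_add_distrib, Finset.sum_div, ← Finset.sum_sub_distrib]
    refine Finset.sum_le_sum fun i _ => Finset.sum_le_sum fun j _ => ?_
    have h := mul_le_mul_of_nonneg_right (hcQ i j) (mul_nonneg (hm.1 i) (hQnn i j))
    simp only [hQ] at h ⊢
    linarith
  have hpos := hmono _ _ hP₁ hP₂ hne
  have h1 := hmin₁ Q hQs
  have h2 := hmin₂ Q hQs
  linarith
end

section
/- (Theorem 4.2) Suppose that for every m ∈ ℙ and U ∈ ℝ^s there is a unique row-stochastic matrix P̂(m,U) minimizing H(m,·,U), and define Γ_m(U) ∈ ℝ^s by Γ_m(U)_i = Σ_j (c_{ij}(m,P̂(m,U)) + U_j) P̂(m,U)_{ij}, and Θ_U(m) ∈ ℝ^s by (Θ_U(m))_j = Σ_i m_i P̂(m,U)_{ij}. Assume the monotonicity condition (A4): there is γ > 0 such that for all U¹, U² ∈ ℝ^s and m¹, m² ∈ ℙ, Σ_i m¹_i (Γ_{m¹}(U²)_i − Γ_{m²}(U²)_i) + Σ_i m²_i (Γ_{m²}(U¹)_i − Γ_{m¹}(U¹)_i) ≥ γ‖m¹ − m²‖²,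 where ‖·‖ is the Euclidean norm. Let N ≥ 1, m̃ ∈ ℙ, G ∈ ℝ^s. If (m^{n,1}, U^{n,1})_{n=0,…,N} and (m^{n,2}, U^{n,2})_{n=0,…,N} both satisfy: m^{0,k} = m̃, U^{N,k} = G, U^{n,k} = Γ_{m^{n,k}}(U^{n+1,k}), and m^{n+1,k} = Θ_{U^{n+1,k}}(m^{n,k}) for n = 0,…,N−1 and k = 1,2, then m^{n,1} = m^{n,2} and U^{n,1} = U^{n,2} for every n = 0,…,N. -/
/-!
Duality argument. Let `D n = ∑ i, (m₁ n i - m₂ n i) * (U₁ n i - U₂ n i)`.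

The map `U ↦ ∑ i, m i * Γ_m(U) i` is the minimal value of `P ↦ H(m, P, U)`, and `H` depends on
`U` only through the linear term, so `Θ_U(m)` is a supergradient of it at `U`
(`sum_mul_Gamma_le`). Applying this at `(m₁ n, U₁ (n+1))` and `(m₂ n, U₂ (n+1))` and combining
with the monotonicity condition gives `D (n+1) + γ ‖m₁ n - m₂ n‖² ≤ D n`
(`duality_step`). As `D 0 = D N = 0` by the boundary conditions, `D` vanishes identically
and the flows agree before time `N`. The backward recursion then identifies the values `U`, and one
step of the forward recursion gives agreement of the flows at time `N`.
-/

open Finset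

/-- Γ_m(U)_i = Σ_j (c_{ij}(m, P̂(m,U)) + U_j) P̂(m,U)_{ij}. -/
def Gamma {s : ℕ}
    (c : Fin s → Fin s → (Fin s → ℝ) → (Fin s → Fin s → ℝ) → ℝ)
    (Phat : (Fin s → ℝ) → (Fin s → ℝ) → (Fin s → Fin s → ℝ))
    (m U : Fin s → ℝ) (i : Fin s) : ℝ :=
  ∑ j, (c i j m (Phat m U) + U j) * Phat m U i j

/-- (Θ_U(m))_j = Σ_i m_i P̂(m,U)_{ij}. -/
def Theta {s : ℕ}
    (Phat : (Fin s → ℝ) → (Fin s → ℝ) → (Fin s → Fin s → ℝ))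
    (U m : Fin s → ℝ) (j : Fin s) : ℝ :=
  ∑ i, m i * Phat m U i j

lemma sum_mul_Gamma_eq_socialCost {s : ℕ}
    (c : Fin s → Fin s → (Fin s → ℝ) → (Fin s → Fin s → ℝ) → ℝ)
    (Phat : (Fin s → ℝ) → (Fin s → ℝ) → (Fin s → Fin s → ℝ)) (m U : Fin s → ℝ) :
    ∑ i, m i * Gamma c Phat m U i = socialCost c m (Phat m U) U := by
  simp only [Gamma, socialCost, mul_sum, ← sum_add_distrib]
  refine sum_congr rfl fun i _ => sum_congr rfl fun j _ => by ring

lemma socialCost_eq_add_sum_Theta {s : ℕ}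
    (c : Fin s → Fin s → (Fin s → ℝ) → (Fin s → Fin s → ℝ) → ℝ)
    (Phat : (Fin s → ℝ) → (Fin s → ℝ) → (Fin s → Fin s → ℝ)) (m U V : Fin s → ℝ) :
    socialCost c m (Phat m U) V =
      socialCost c m (Phat m U) U + ∑ j, (V j - U j) * Theta Phat U m j := by
  simp only [Theta, socialCost, mul_sum]
  rw [sum_comm (f := fun j i => (V j - U j) * (m i * Phat m U i j))]
  simp only [← sum_add_distrib]
  refine sum_congr rfl fun i _ => sum_congr rfl fun j _ => by ring

/-- `Θ_U(m)` is a supergradient at `U` of the minimal social cost `V ↦ ∑ i, m i * Γ_m(V) i`. -/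
lemma sum_mul_Gamma_le {s : ℕ}
    {c : Fin s → Fin s → (Fin s → ℝ) → (Fin s → Fin s → ℝ) → ℝ}
    {Phat : (Fin s → ℝ) → (Fin s → ℝ) → (Fin s → Fin s → ℝ)} {m : Fin s → ℝ}
    (hP : ∀ U, RowStochastic (Phat m U) ∧
      ∀ P, RowStochastic P → socialCost c m (Phat m U) U ≤ socialCost c m P U)
    (U V : Fin s → ℝ) :
    ∑ i, m i * Gamma c Phat m V i ≤
      ∑ i, m i * Gamma c Phat m U i + ∑ j, (V j - U j) * Theta Phat U m j := by
  rw [sum_mul_Gamma_eq_socialCost, sum_mul_Gamma_eq_socialCost, ← socialCost_eq_add_sum_Theta]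
  exact (hP V).2 _ (hP U).1

/-- One time step of the duality pairing: it decreases by at least `γ ‖m₁ - m₂‖²`. -/
lemma duality_step {s : ℕ}
    {c : Fin s → Fin s → (Fin s → ℝ) → (Fin s → Fin s → ℝ) → ℝ}
    {Phat : (Fin s → ℝ) → (Fin s → ℝ) → (Fin s → Fin s → ℝ)} {m₁ m₂ V₁ V₂ : Fin s → ℝ} {γ : ℝ}
    (hP₁ : ∀ U, RowStochastic (Phat m₁ U) ∧
      ∀ P, RowStochastic P → socialCost c m₁ (Phat m₁ U) U ≤ socialCost c m₁ P U)
    (hP₂ : ∀ U, RowStochastic (Phat m₂ U) ∧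
      ∀ P, RowStochastic P → socialCost c m₂ (Phat m₂ U) U ≤ socialCost c m₂ P U)
    (hA4 : γ * ∑ i, (m₁ i - m₂ i) ^ 2 ≤
      ∑ i, m₁ i * (Gamma c Phat m₁ V₂ i - Gamma c Phat m₂ V₂ i) +
        ∑ i, m₂ i * (Gamma c Phat m₂ V₁ i - Gamma c Phat m₁ V₁ i)) :
    ∑ i, (Theta Phat V₁ m₁ i - Theta Phat V₂ m₂ i) * (V₁ i - V₂ i) +
        γ * ∑ i, (m₁ i - m₂ i) ^ 2 ≤
      ∑ i, (m₁ i - m₂ i) * (Gamma c Phat m₁ V₁ i - Gamma c Phat m₂ V₂ i) := by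
  have h₁ := sum_mul_Gamma_le hP₁ V₁ V₂
  have h₂ := sum_mul_Gamma_le hP₂ V₂ V₁
  simp only [mul_sub, sub_mul, sum_sub_distrib, mul_comm (V₁ _), mul_comm (V₂ _)] at h₁ h₂ hA4 ⊢
  linarith

theorem uniqueness_of_solution_with_initial_terminal_values (s : ℕ) (hs : 1 ≤ s)
    (c : Fin s → Fin s → (Fin s → ℝ) → (Fin s → Fin s → ℝ) → ℝ)
    (Phat : (Fin s → ℝ) → (Fin s → ℝ) → (Fin s → Fin s → ℝ))
    (hPhat : ∀ m U, IsSimplex m →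
      RowStochastic (Phat m U) ∧
      (∀ P, RowStochastic P → socialCost c m (Phat m U) U ≤ socialCost c m P U) ∧
      (∀ P, RowStochastic P →
        (∀ Q, RowStochastic Q → socialCost c m P U ≤ socialCost c m Q U) →
        P = Phat m U))
    (γ : ℝ) (hγ : 0 < γ)
    (hA4 : ∀ U₁ U₂ m₁ m₂ : Fin s → ℝ, IsSimplex m₁ → IsSimplex m₂ →
      γ * ∑ i, (m₁ i - m₂ i) ^ 2 ≤
        ∑ i, m₁ i * (Gamma c Phat m₁ U₂ i - Gamma c Phat m₂ U₂ i) +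
          ∑ i, m₂ i * (Gamma c Phat m₂ U₁ i - Gamma c Phat m₁ U₁ i))
    (N : ℕ) (hN : 1 ≤ N) (mTilde : Fin s → ℝ) (hmTilde : IsSimplex mTilde)
    (G : Fin s → ℝ)
    (m₁ U₁ m₂ U₂ : ℕ → Fin s → ℝ)
    (hsimp₁ : ∀ n ≤ N, IsSimplex (m₁ n)) (hsimp₂ : ∀ n ≤ N, IsSimplex (m₂ n))
    (hinit₁ : m₁ 0 = mTilde) (hinit₂ : m₂ 0 = mTilde)
    (hterm₁ : U₁ N = G) (hterm₂ : U₂ N = G)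
    (hU₁ : ∀ n < N, U₁ n = Gamma c Phat (m₁ n) (U₁ (n + 1)))
    (hU₂ : ∀ n < N, U₂ n = Gamma c Phat (m₂ n) (U₂ (n + 1)))
    (hm₁ : ∀ n < N, m₁ (n + 1) = Theta Phat (U₁ (n + 1)) (m₁ n))
    (hm₂ : ∀ n < N, m₂ (n + 1) = Theta Phat (U₂ (n + 1)) (m₂ n)) :
    ∀ n ≤ N, m₁ n = m₂ n ∧ U₁ n = U₂ n := by
  set D : ℕ → ℝ := fun n => ∑ i, (m₁ n i - m₂ n i) * (U₁ n i - U₂ n i) with hD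
  have hstep : ∀ n < N, D (n + 1) + γ * ∑ i, (m₁ n i - m₂ n i) ^ 2 ≤ D n := by
    intro n hn
    have key := duality_step
      (fun U => ⟨(hPhat _ U (hsimp₁ n hn.le)).1, (hPhat _ U (hsimp₁ n hn.le)).2.1⟩)
      (fun U => ⟨(hPhat _ U (hsimp₂ n hn.le)).1, (hPhat _ U (hsimp₂ n hn.le)).2.1⟩)
      (hA4 (U₁ (n + 1)) (U₂ (n + 1)) _ _ (hsimp₁ n hn.le) (hsimp₂ n hn.le))
    rwa [← hm₁ n hn, ← hm₂ n hn, ← hU₁ n hn, ← hU₂ n hn] at key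
  have hsq : ∀ n, 0 ≤ ∑ i, (m₁ n i - m₂ n i) ^ 2 := fun n => sum_nonneg fun i _ => sq_nonneg _
  have hD0 : D 0 = 0 := by simp [hD, hinit₁, hinit₂]
  have hDN : D N = 0 := by simp [hD, hterm₁, hterm₂]
  have hDle : ∀ n ≤ N, D n ≤ 0 := by
    intro n
    induction n with
    | zero => exact fun _ => hD0.le
    | succ n ih =>
      intro hn
      linarith [ih (by omega), hstep n hn, mul_nonneg hγ.le (hsq n)]
  have hDge : ∀ n ≤ N, 0 ≤ D n := by
    intro n hn
    induction hn using Nat.decreasingInduction with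
    | self => exact hDN.ge
    | of_succ n hn ih => linarith [hstep n hn, mul_nonneg hγ.le (hsq n)]
  have hm : ∀ n < N, m₁ n = m₂ n := by
    intro n hn
    have h0 : ∑ i, (m₁ n i - m₂ n i) ^ 2 = 0 := by
      have h := hstep n hn
      have h' : γ * ∑ i, (m₁ n i - m₂ n i) ^ 2 ≤ 0 := by
        linarith [hDle n hn.le, hDge (n + 1) hn]
      exact le_antisymm (nonpos_of_mul_nonpos_right h' hγ) (hsq n)
    ext i
    have := (sum_eq_zero_iff_of_nonneg fun i _ => sq_nonneg (m₁ n i - m₂ n i)).1 h0 i (mem_univ i)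
    exact sub_eq_zero.1 (pow_eq_zero_iff two_ne_zero |>.1 this)
  have hU : ∀ n ≤ N, U₁ n = U₂ n := by
    intro n hn
    induction hn using Nat.decreasingInduction with
    | self => rw [hterm₁, hterm₂]
    | of_succ n hn ih => rw [hU₁ n hn, hU₂ n hn, hm n hn, ih]
  intro n hn
  refine ⟨?_, hU n hn⟩
  rcases hn.lt_or_eq with h | rfl
  · exact hm n h
  · obtain ⟨k, rfl⟩ := Nat.exists_eq_add_of_le' hN
    rw [hm₁ k (by omega), hm₂ k (by omega), hm k (by omega), hU (k + 1) le_rfl]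
end

section
/- (Lemma 5.1) Fix m ∈ ℙ with m_i ≥ ε for all i, where ε > 0, and fix U ∈ ℝ^s. Let P̂ be the unique row-stochastic matrix minimizing H(m,·,U), and define Γ_m(U)_i = Σ_j (c_{ij}(m,P̂) + U_j) P̂_{ij}. Assume: (i) there is L > 0 such that for all i,j and all row-stochastic P, P', |c_{ij}(m,P) − c_{ij}(m,P')| ≤ L‖P − P'‖ (Euclidean norm on ℝ^{s×s}); (ii) there is C > 0 such that for all p, p' ∈ S, Σ_j |c_{pj}(m,P̂) − c_{p'j}(m,P̃)| P̂_{pj} ≤ C, where P̃ is the matrix obtained from P̂ by replacing its p'-th row with its p-th row. Then for all p, p' ∈ S, |Γ_m(U)_p − Γ_m(U)_{p'}| ≤ C + L√s/ε. -/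
/-!
Write `Γ i = ∑ j, (c i j m Phat + U j) * Phat i j`, so that `H(m, P, U)` is an `m`-weighted sum of
such row costs. Let `Q` be `Phat` with row `p'` replaced by row `p`, where `p ≠ p'`. Only row `p'`
has moved, and two probability vectors are at squared distance at most `2 ≤ s`, so
`‖Phat - Q‖ ≤ √s`. Hence each row cost other than the `p'`-th changes by at most `L√s`, and
`H(m, Phat, U) ≤ H(m, Q, U)` forces
`m p' * (Γ p' - (cost of row p' under Q)) ≤ (1 - m p') * L√s`.
Divide by `m p' ≥ ε`. The cost of row `p'` under `Q` exceeds `Γ p` by at most `C`, by the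
hypothesis on `C`. Exchanging `p` and `p'` gives the other inequality.
-/

open Finset

lemma socialCost_eq_sum_rows {s : ℕ}
    (c : Fin s → Fin s → (Fin s → ℝ) → (Fin s → Fin s → ℝ) → ℝ)
    (m : Fin s → ℝ) (P : Fin s → Fin s → ℝ) (U : Fin s → ℝ) :
    socialCost c m P U = ∑ i, m i * ∑ j, (c i j m P + U j) * P i j := by
  unfold socialCost
  rw [← Finset.sum_add_distrib]
  refine Finset.sum_congr rfl fun i _ => ?_
  rw [← Finset.sum_add_distrib, Finset.mul_sum]
  exact Finset.sum_congr rfl fun j _ => by ring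

lemma rowStochastic_update {s : ℕ} {P : Fin s → Fin s → ℝ} (hP : RowStochastic P)
    (p p' : Fin s) : RowStochastic (Function.update P p' (P p)) := by
  refine ⟨fun i j => ?_, fun i => ?_⟩ <;> by_cases h : i = p'
  · subst h; simpa using hP.1 p j
  · simpa [h] using hP.1 i j
  · subst h; simpa using hP.2 p
  · simpa [h] using hP.2 i

/-- Entries of a stochastic matrix lie in `[0, 1]`, so `(a - b)² ≤ a + b` entrywise, and the
squared distance between two rows is at most `2`. -/
lemma sum_sq_sub_row_le_two {s : ℕ} {P : Fin s → Fin s → ℝ} (hP : RowStochastic P)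
    (p p' : Fin s) : ∑ j, (P p' j - P p j) ^ 2 ≤ 2 := by
  have hle : ∀ i j, P i j ≤ 1 := fun i j => by
    rw [← hP.2 i]
    exact Finset.single_le_sum (fun k _ => hP.1 i k) (Finset.mem_univ j)
  calc ∑ j, (P p' j - P p j) ^ 2 ≤ ∑ j, (P p' j + P p j) := by
        refine Finset.sum_le_sum fun j _ => ?_
        nlinarith [hP.1 p' j, hP.1 p j, hle p' j, hle p j, mul_nonneg (hP.1 p' j) (hP.1 p j)]
    _ = 2 := by rw [Finset.sum_add_distrib, hP.2, hP.2]; norm_num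

lemma norm_sub_update_le {s : ℕ} {P : Fin s → Fin s → ℝ} (hP : RowStochastic P)
    {p p' : Fin s} (hne : p ≠ p') :
    Real.sqrt (∑ i, ∑ j, (P i j - Function.update P p' (P p) i j) ^ 2) ≤ Real.sqrt s := by
  have hs2 : (2 : ℝ) ≤ s := by
    have : 2 ≤ s := by
      have := p.2
      have := p'.2
      have : p.1 ≠ p'.1 := fun h => hne (Fin.ext h)
      omega
    exact_mod_cast this
  refine Real.sqrt_le_sqrt ?_
  rw [Finset.sum_eq_single p' (fun i _ hi => by simp [hi]) (by simp)]
  simpa using (sum_sq_sub_row_le_two hP p p').trans hs2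

/-- If a weighted mean of `x` is nonpositive and `x i ≥ -K` away from the index `k`, then `x k`
cannot exceed `K / ε`, where `ε` is a lower bound for the weight at `k`. -/
lemma le_div_of_weighted_sum_nonpos {ι : Type*} [Fintype ι] {m x : ι → ℝ} {K ε : ℝ} {k : ι}
    (hm : ∀ i, 0 ≤ m i) (hm1 : ∑ i, m i = 1) (hε : 0 < ε) (hk : ε ≤ m k) (hK : 0 ≤ K)
    (hx : ∀ i, i ≠ k → -K ≤ x i) (hsum : ∑ i, m i * x i ≤ 0) : x k ≤ K / ε := by
  by_contra! hlt
  have hk0 : 0 < x k := (div_nonneg hK hε.le).trans_lt hlt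
  have h1 : m k * (x k + K) ≤ ∑ i, m i * (x i + K) := by
    refine Finset.single_le_sum (f := fun i => m i * (x i + K)) (fun i _ => ?_)
      (Finset.mem_univ k)
    refine mul_nonneg (hm i) ?_
    by_cases h : i = k
    · subst h; linarith
    · linarith [hx i h]
  have h2 : ∑ i, m i * (x i + K) = ∑ i, m i * x i + K := by
    simp only [mul_add, Finset.sum_add_distrib, ← Finset.sum_mul, hm1, one_mul]
  have h3 : K < x k * ε := (div_lt_iff₀ hε).1 hlt
  nlinarith [mul_le_mul_of_nonneg_right hk hk0.le, mul_nonneg (hm k) hK]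

theorem lemma_5_1 (s : ℕ) (hs : 1 ≤ s)
    (c : Fin s → Fin s → (Fin s → ℝ) → (Fin s → Fin s → ℝ) → ℝ)
    (m : Fin s → ℝ) (hm : IsSimplex m)
    (ε : ℝ) (hε : 0 < ε) (hmε : ∀ i, ε ≤ m i)
    (U : Fin s → ℝ)
    (Phat : Fin s → Fin s → ℝ) (hPs : RowStochastic Phat)
    (hmin : ∀ P : Fin s → Fin s → ℝ, RowStochastic P →
      socialCost c m Phat U ≤ socialCost c m P U)
    (huniq : ∀ P : Fin s → Fin s → ℝ, RowStochastic P →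
      (∀ Q, RowStochastic Q → socialCost c m P U ≤ socialCost c m Q U) → P = Phat)
    (L : ℝ) (hL : 0 < L)
    (hLip : ∀ (i j : Fin s) (P P' : Fin s → Fin s → ℝ),
      RowStochastic P → RowStochastic P' →
      |c i j m P - c i j m P'| ≤ L * Real.sqrt (∑ p, ∑ q, (P p q - P' p q) ^ 2))
    (C : ℝ) (hC : 0 < C)
    (hCbd : ∀ p p' : Fin s,
      ∑ j, |c p j m Phat - c p' j m (Function.update Phat p' (Phat p))| * Phat p j ≤ C) :
    ∀ p p' : Fin s,
      |(∑ j, (c p j m Phat + U j) * Phat p j) -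
        (∑ j, (c p' j m Phat + U j) * Phat p' j)| ≤ C + L * Real.sqrt s / ε := by
  have hK : 0 ≤ L * Real.sqrt s := by positivity
  have key : ∀ p p' : Fin s, p ≠ p' →
      (∑ j, (c p' j m Phat + U j) * Phat p' j) - (∑ j, (c p j m Phat + U j) * Phat p j)
        ≤ C + L * Real.sqrt s / ε := by
    intro p p' hne
    set Q := Function.update Phat p' (Phat p) with hQ
    have hQs : RowStochastic Q := rowStochastic_update hPs p p'
    have hdiff : ∀ i j, |c i j m Phat - c i j m Q| ≤ L * Real.sqrt s := fun i j =>
      (hLip i j Phat Q hPs hQs).trans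
        (mul_le_mul_of_nonneg_left (norm_sub_update_le hPs hne) hL.le)
    have hmove := le_div_of_weighted_sum_nonpos
      (x := fun i => (∑ j, (c i j m Phat + U j) * Phat i j) - ∑ j, (c i j m Q + U j) * Q i j)
      hm.1 hm.2 hε (hmε p') hK (fun i hi => by
        have hrow : Q i = Phat i := by simp [hQ, hi]
        rw [hrow, ← Finset.sum_sub_distrib]
        calc -(L * Real.sqrt s) = ∑ j, -(L * Real.sqrt s) * Phat i j := by
              rw [← Finset.mul_sum, hPs.2 i, mul_one]
          _ ≤ _ := Finset.sum_le_sum fun j _ => by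
              nlinarith [mul_le_mul_of_nonneg_right (neg_le_of_abs_le (hdiff i j)) (hPs.1 i j)])
      (by
        have h := hmin Q hQs
        rw [socialCost_eq_sum_rows, socialCost_eq_sum_rows] at h
        simp only [mul_sub, Finset.sum_sub_distrib]
        linarith)
    have hrow' : Q p' = Phat p := by simp [hQ]
    have hswap : (∑ j, (c p' j m Q + U j) * Q p' j) - (∑ j, (c p j m Phat + U j) * Phat p j)
        ≤ C := by
      rw [hrow', ← Finset.sum_sub_distrib]
      refine (Finset.sum_le_sum fun j _ => ?_).trans (hCbd p p')
      nlinarith [mul_le_mul_of_nonneg_right (neg_abs_le (c p j m Phat - c p' j m Q)) (hPs.1 p j)]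
    linarith
  intro p p'
  by_cases h : p = p'
  · subst h
    rw [sub_self, abs_zero]
    positivity
  · exact abs_sub_le_iff.2 ⟨key p' p (Ne.symm h), key p p' h⟩
end

section
/- (Theorem 5.2, part 2) Suppose that for every m ∈ ℙ and U ∈ ℝ^s the minimum of H(m,·,U) over row-stochastic matrices is attained; define Φ_m(U) = min_P H(m,P,U) and, for a minimizer P̂ of H(m,·,U), Γ_m(U)_i = Σ_j (c_{ij}(m,P̂) + U_j) P̂_{ij} and (Θ_U(m))_j = Σ_i m_i P̂_{ij}. Let m̄ ∈ ℙ and let (m̄, Ū¹, λ̄¹) and (m̄, Ū², λ̄²) be two stationary solutions with the same distribution m̄, i.e. Ū^k_i + λ̄^k = Γ_{m̄}(Ū^k)_i for all i and m̄ = Θ_{Ū^k}(m̄) for k = 1,2. Then λ̄¹ = λ̄². -/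
/-!
If `m` is invariant under `P`, then the potential term of `H(m,P,U)` equals `∑ j, U j * m j`, whatever
`P` is (`socialCost_of_invariant`). Averaging the stationary equation over `m` therefore identifies
the critical value with the bare transition cost `∑ i, ∑ j, c i j m P * m i * P i j` of the
optimal matrix (`critical_value_eq`). Each of the two optimal matrices leaves `mBar` invariant, so each
is a competitor in the minimization problem of the other with the same potential term; hence their
transition costs agree.
-/

open Finset

lemma socialCost_of_invariant {s : ℕ}
    (c : Fin s → Fin s → (Fin s → ℝ) → (Fin s → Fin s → ℝ) → ℝ)
    (m : Fin s → ℝ) (P : Fin s → Fin s → ℝ) (U : Fin s → ℝ)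
    (hm : ∀ j, m j = ∑ i, m i * P i j) :
    socialCost c m P U = ∑ i, ∑ j, c i j m P * m i * P i j + ∑ j, U j * m j := by
  unfold socialCost
  congr 1
  rw [Finset.sum_comm]
  refine Finset.sum_congr rfl fun j _ => ?_
  conv_rhs => rw [hm j, Finset.mul_sum]
  exact Finset.sum_congr rfl fun i _ => by ring

lemma critical_value_eq {s : ℕ}
    (c : Fin s → Fin s → (Fin s → ℝ) → (Fin s → Fin s → ℝ) → ℝ)
    (m : Fin s → ℝ) (P : Fin s → Fin s → ℝ) (U : Fin s → ℝ) (lam : ℝ)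
    (hsimplex : IsSimplex m)
    (hU : ∀ i, U i + lam = ∑ j, (c i j m P + U j) * P i j)
    (hm : ∀ j, m j = ∑ i, m i * P i j) :
    lam = ∑ i, ∑ j, c i j m P * m i * P i j := by
  have average : ∑ i, m i * (U i + lam) = socialCost c m P U := by
    unfold socialCost
    rw [← Finset.sum_add_distrib]
    refine Finset.sum_congr rfl fun i _ => ?_
    rw [hU i, Finset.mul_sum, ← Finset.sum_add_distrib]
    exact Finset.sum_congr rfl fun j _ => by ring
  have split : ∑ i, m i * (U i + lam) = ∑ i, U i * m i + lam := by
    simp only [mul_add, Finset.sum_add_distrib, ← Finset.sum_mul, hsimplex.2, one_mul]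
    simp only [mul_comm]
  rw [socialCost_of_invariant c m P U hm] at average
  linarith

theorem critical_values_of_stationary_solutions_coincide (s : ℕ) (hs : 1 ≤ s)
    (c : Fin s → Fin s → (Fin s → ℝ) → (Fin s → Fin s → ℝ) → ℝ)
    (hattained : ∀ (m U : Fin s → ℝ), IsSimplex m →
      ∃ P : Fin s → Fin s → ℝ, RowStochastic P ∧
        ∀ Q, RowStochastic Q → socialCost c m P U ≤ socialCost c m Q U)
    (mBar : Fin s → ℝ) (hmBar : IsSimplex mBar)
    (UBar₁ UBar₂ : Fin s → ℝ) (lamBar₁ lamBar₂ : ℝ)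
    (PBar₁ PBar₂ : Fin s → Fin s → ℝ)
    (hPs₁ : RowStochastic PBar₁) (hPs₂ : RowStochastic PBar₂)
    (hmin₁ : ∀ P, RowStochastic P →
      socialCost c mBar PBar₁ UBar₁ ≤ socialCost c mBar P UBar₁)
    (hmin₂ : ∀ P, RowStochastic P →
      socialCost c mBar PBar₂ UBar₂ ≤ socialCost c mBar P UBar₂)
    (hstatU₁ : ∀ i, UBar₁ i + lamBar₁ =
      ∑ j, (c i j mBar PBar₁ + UBar₁ j) * PBar₁ i j)
    (hstatm₁ : ∀ j, mBar j = ∑ i, mBar i * PBar₁ i j)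
    (hstatU₂ : ∀ i, UBar₂ i + lamBar₂ =
      ∑ j, (c i j mBar PBar₂ + UBar₂ j) * PBar₂ i j)
    (hstatm₂ : ∀ j, mBar j = ∑ i, mBar i * PBar₂ i j) :
    lamBar₁ = lamBar₂ := by
  have h₁ := hmin₁ PBar₂ hPs₂
  have h₂ := hmin₂ PBar₁ hPs₁
  rw [socialCost_of_invariant c _ _ _ hstatm₁, socialCost_of_invariant c _ _ _ hstatm₂] at h₁ h₂
  rw [critical_value_eq c _ _ _ _ hmBar hstatU₁ hstatm₁,
    critical_value_eq c _ _ _ _ hmBar hstatU₂ hstatm₂]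
  linarith
end

section
/- (Example 1, strict monotonicity) Let s = 3 and α₁, α₂, α₃ > 0. For m ∈ ℙ with m_i > 0 for all i, define c_{ij}(m,P) = α₁ m_i + α₂ Σ_p m_p P_{pj} − α₃ P_{ij}/ln(P_{ij}) on matrices P with all entries in (0,1). Then for any two row-stochastic matrices P¹ ≠ P² with all entries in (0,1), Σ_{i,j} (c_{ij}(m,P¹) − c_{ij}(m,P²))(P¹_{ij} − P²_{ij}) m_i > 0. -/
/-!
Write `D = P₁ - P₂`. The `α₁` terms cancel, and summing over `i` first turns the `α₂` terms into
`α₂ * ∑ j, (∑ p, m p * D p j) ^ 2`, which is nonnegative. The `α₃` terms are each nonnegative, and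
positive wherever `D i j ≠ 0`, because `x ↦ x / log x` is strictly decreasing on `(0, 1)`
(`strictAntiOn_div_log`).
-/

open Finset

/-- Here `x / log x = -(x / (-log x))`, where the numerator `x` increases and the positive
denominator `-log x` decreases. -/
lemma strictAntiOn_div_log : StrictAntiOn (fun x : ℝ => x / Real.log x) (Set.Ioo 0 1) := by
  intro x hx y hy hxy
  have hlog : Real.log x < Real.log y := Real.log_lt_log hx.1 hxy
  have hy0 : Real.log y < 0 := Real.log_neg hy.1 hy.2
  have h : x / -Real.log x < y / -Real.log y :=
    div_lt_div₀ hxy (by linarith) hy.1.le (by linarith)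
  rw [div_neg, div_neg] at h
  exact neg_lt_neg_iff.mp h

lemma div_log_sub_mul_sub_pos {x y : ℝ} (hx : x ∈ Set.Ioo (0 : ℝ) 1) (hy : y ∈ Set.Ioo (0 : ℝ) 1)
    (hxy : x ≠ y) : 0 < (y / Real.log y - x / Real.log x) * (x - y) := by
  rcases lt_or_gt_of_ne hxy with h | h
  · exact mul_pos_of_neg_of_neg (sub_neg.mpr (strictAntiOn_div_log hx hy h)) (sub_neg.mpr h)
  · exact mul_pos (sub_pos.mpr (strictAntiOn_div_log hy hx h)) (sub_pos.mpr h)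

/-- The `α₁` terms cancel and the `α₂` terms form a sum of squares over the columns. -/
lemma sum_cost_diff_eq (α₁ α₂ α₃ : ℝ) (m : Fin 3 → ℝ) (P Q G H : Fin 3 → Fin 3 → ℝ) :
    ∑ i, ∑ j, ((α₁ * m i + α₂ * (∑ p, m p * P p j) - α₃ * G i j) -
        (α₁ * m i + α₂ * (∑ p, m p * Q p j) - α₃ * H i j)) * (P i j - Q i j) * m i =
      α₂ * ∑ j, (∑ p, m p * (P p j - Q p j)) ^ 2 +
        α₃ * ∑ i, ∑ j, (H i j - G i j) * (P i j - Q i j) * m i := by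
  simp only [Fin.sum_univ_three]
  ring

theorem example1_strict_monotonicity (α₁ α₂ α₃ : ℝ)
    (hα₁ : 0 < α₁) (hα₂ : 0 < α₂) (hα₃ : 0 < α₃)
    (m : Fin 3 → ℝ) (hm : IsSimplex m) (hmpos : ∀ i, 0 < m i)
    (P₁ P₂ : Fin 3 → Fin 3 → ℝ)
    (hP₁ : RowStochastic P₁) (hP₂ : RowStochastic P₂)
    (hP₁o : ∀ i j, P₁ i j ∈ Set.Ioo (0 : ℝ) 1)
    (hP₂o : ∀ i j, P₂ i j ∈ Set.Ioo (0 : ℝ) 1)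
    (hne : P₁ ≠ P₂) :
    0 < ∑ i, ∑ j,
      ((α₁ * m i + α₂ * (∑ p, m p * P₁ p j) - α₃ * (P₁ i j / Real.log (P₁ i j))) -
          (α₁ * m i + α₂ * (∑ p, m p * P₂ p j) - α₃ * (P₂ i j / Real.log (P₂ i j)))) *
        (P₁ i j - P₂ i j) * m i := by
  rw [sum_cost_diff_eq α₁ α₂ α₃ m P₁ P₂ (fun i j => P₁ i j / Real.log (P₁ i j))
    (fun i j => P₂ i j / Real.log (P₂ i j))]
  obtain ⟨i₀, hi₀⟩ := Function.ne_iff.mp hne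
  obtain ⟨j₀, hj₀⟩ := Function.ne_iff.mp hi₀
  have hterm : ∀ i j, P₁ i j ≠ P₂ i j → 0 <
      (P₂ i j / Real.log (P₂ i j) - P₁ i j / Real.log (P₁ i j)) * (P₁ i j - P₂ i j) * m i :=
    fun i j h => mul_pos (div_log_sub_mul_sub_pos (hP₁o i j) (hP₂o i j) h) (hmpos i)
  have hterm_nonneg : ∀ i j, 0 ≤
      (P₂ i j / Real.log (P₂ i j) - P₁ i j / Real.log (P₁ i j)) * (P₁ i j - P₂ i j) * m i := by
    intro i j
    by_cases h : P₁ i j = P₂ i j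
    · simp [h]
    · exact (hterm i j h).le
  refine add_pos_of_nonneg_of_pos
    (mul_nonneg hα₂.le (Finset.sum_nonneg fun j _ => sq_nonneg _)) (mul_pos hα₃ ?_)
  refine Finset.sum_pos' (fun i _ => Finset.sum_nonneg fun j _ => hterm_nonneg i j)
    ⟨i₀, Finset.mem_univ _, ?_⟩
  exact Finset.sum_pos' (fun j _ => hterm_nonneg i₀ j)
    ⟨j₀, Finset.mem_univ _, hterm i₀ j₀ hj₀⟩
end

section
/- (Example 2, explicit optimal strategy) Let s = 2, let m ∈ ℙ have strictly positive entries, and let U ∈ ℝ². Define c_{ij}(m,P) = m_i + ln((P_{ij})²) for row-stochastic 2×2 matrices P with entries in (0,1). Then the matrix P̂ with entries P̂_{ij} = e^{−U_j/2} / (e^{−U_1/2} + e^{−U_2/2}) (independent of i) is the unique minimizer of H(m,P,U) = Σ_{i,j} (m_i + ln((P_{ij})²)) m_i P_{ij} + Σ_{i,j} U_j m_i P_{ij} over row-stochastic matrices P with entries in (0,1). -/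
/-!
The cost is a relative entropy up to a constant. Write `q j = exp (-U j / 2) / Z`, where
`Z = exp (-U 0 / 2) + exp (-U 1 / 2)`; then `U j = -2 * log (q j) - 2 * log Z`, and since the rows
of `P` sum to one, the cost of `P` equals
`∑ i, m i * (m i - 2 * log Z) + 2 * ∑ i, m i * KL(P i ‖ q)`.
Each Kullback–Leibler divergence is a sum of the terms `p * (log p - log q) - p + q`
(`klTerm`), which are nonnegative and vanish only at `p = q`. As all `m i` are positive, `q` is
strictly better than every other strategy.
-/

open Finset

/-- Social cost of Example 2 with c_{ij}(m,P) = m_i + ln((P_{ij})²). -/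
noncomputable def ex2SocialCost (m : Fin 2 → ℝ) (P : Fin 2 → Fin 2 → ℝ)
    (U : Fin 2 → ℝ) : ℝ :=
  ∑ i, ∑ j, (m i + Real.log ((P i j) ^ 2)) * m i * P i j +
    ∑ i, ∑ j, U j * m i * P i j

/-- The pointwise contribution of masses `p`, `q` to the Kullback–Leibler divergence, with the
correction `- p + q`, which cancels on summation over probability vectors and makes each term
nonnegative for positive `p`, `q`. -/
noncomputable def klTerm (p q : ℝ) : ℝ := p * (Real.log p - Real.log q) - p + q

lemma klTerm_self (p : ℝ) : klTerm p p = 0 := by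
  simp [klTerm]

lemma klTerm_pos {p q : ℝ} (hp : 0 < p) (hq : 0 < q) (h : p ≠ q) : 0 < klTerm p q := by
  have hne : q / p ≠ 1 := fun e => h ((div_eq_one_iff_eq hp.ne').1 e).symm
  have hlog := Real.log_lt_sub_one_of_pos (div_pos hq hp) hne
  rw [Real.log_div hq.ne' hp.ne'] at hlog
  have hmul := mul_lt_mul_of_pos_left hlog hp
  have hcancel : p * (q / p - 1) = q - p := by field_simp
  unfold klTerm
  linarith

lemma klTerm_nonneg {p q : ℝ} (hp : 0 < p) (hq : 0 < q) : 0 ≤ klTerm p q := by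
  rcases eq_or_ne p q with rfl | h
  · exact (klTerm_self p).ge
  · exact (klTerm_pos hp hq h).le

/-- The cost of `P` is a constant plus twice the `m`-weighted divergence of the rows of `P` from
the rows of `Q`, when `log (Q i j) = -U j / 2 - L` with `L` the log-partition constant. -/
lemma ex2SocialCost_eq (m U : Fin 2 → ℝ) (P Q : Fin 2 → Fin 2 → ℝ) (L : ℝ)
    (hP : RowStochastic P) (hQ : RowStochastic Q)
    (hL : ∀ i j, Real.log (Q i j) = -U j / 2 - L) :
    ex2SocialCost m P U =
      ∑ i, m i * (m i - 2 * L) + 2 * ∑ i, m i * ∑ j, klTerm (P i j) (Q i j) := by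
  have hrow : ∀ i, ∑ j, (m i + Real.log ((P i j) ^ 2)) * m i * P i j + ∑ j, U j * m i * P i j =
      m i * (m i - 2 * L) + 2 * (m i * ∑ j, klTerm (P i j) (Q i j)) := by
    intro i
    have h1 := hP.2 i
    have h2 := hQ.2 i
    simp only [Fin.sum_univ_two, klTerm, hL, Real.log_pow] at h1 h2 ⊢
    push_cast
    linear_combination (m i * m i - 2 * m i * L + 2 * m i) * h1 - 2 * m i * h2
  unfold ex2SocialCost
  rw [← sum_add_distrib, sum_congr rfl fun i _ => hrow i, sum_add_distrib, mul_sum]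

theorem example2_explicit_optimal_strategy
    (m : Fin 2 → ℝ) (hm : IsSimplex m) (hmpos : ∀ i, 0 < m i)
    (U : Fin 2 → ℝ)
    (Phat : Fin 2 → Fin 2 → ℝ)
    (hPhat : ∀ i j, Phat i j =
      Real.exp (-U j / 2) / (Real.exp (-U 0 / 2) + Real.exp (-U 1 / 2))) :
    RowStochastic Phat ∧ (∀ i j, Phat i j ∈ Set.Ioo (0 : ℝ) 1) ∧
    (∀ P : Fin 2 → Fin 2 → ℝ, RowStochastic P →
      (∀ i j, P i j ∈ Set.Ioo (0 : ℝ) 1) →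
      ex2SocialCost m Phat U ≤ ex2SocialCost m P U) ∧
    (∀ P : Fin 2 → Fin 2 → ℝ, RowStochastic P →
      (∀ i j, P i j ∈ Set.Ioo (0 : ℝ) 1) →
      (∀ Q : Fin 2 → Fin 2 → ℝ, RowStochastic Q →
        (∀ i j, Q i j ∈ Set.Ioo (0 : ℝ) 1) →
        ex2SocialCost m P U ≤ ex2SocialCost m Q U) →
      P = Phat) := by
  have hZ : 0 < Real.exp (-U 0 / 2) + Real.exp (-U 1 / 2) := by positivity
  have hpos : ∀ i j, 0 < Phat i j := fun i j => by rw [hPhat]; positivity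
  have hsum : ∀ i, ∑ j, Phat i j = 1 := fun i => by
    rw [Fin.sum_univ_two, hPhat, hPhat, ← add_div, div_self hZ.ne']
  have hstoch : RowStochastic Phat := ⟨fun i j => (hpos i j).le, hsum⟩
  have hIoo : ∀ i j, Phat i j ∈ Set.Ioo (0 : ℝ) 1 := by
    intro i j
    refine ⟨hpos i j, ?_⟩
    have h := hsum i
    rw [Fin.sum_univ_two] at h
    have h0 := hpos i 0
    have h1 := hpos i 1
    fin_cases j <;> simp only [Fin.zero_eta, Fin.mk_one] <;> linarith
  have hlog : ∀ i j, Real.log (Phat i j) =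
      -U j / 2 - Real.log (Real.exp (-U 0 / 2) + Real.exp (-U 1 / 2)) := fun i j => by
    rw [hPhat, Real.log_div (Real.exp_pos _).ne' hZ.ne', Real.log_exp]
  have hlt : ∀ P : Fin 2 → Fin 2 → ℝ, RowStochastic P →
      (∀ i j, P i j ∈ Set.Ioo (0 : ℝ) 1) → P ≠ Phat →
      ex2SocialCost m Phat U < ex2SocialCost m P U := by
    intro P hP hP' hne
    rw [ex2SocialCost_eq m U P Phat _ hP hstoch hlog,
      ex2SocialCost_eq m U Phat Phat _ hstoch hstoch hlog]
    simp only [klTerm_self, sum_const_zero, mul_zero, add_zero]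
    obtain ⟨i, hi⟩ := Function.ne_iff.1 hne
    obtain ⟨j, hij⟩ := Function.ne_iff.1 hi
    have hnn : ∀ i j, 0 ≤ klTerm (P i j) (Phat i j) :=
      fun i j => klTerm_nonneg (hP' i j).1 (hpos i j)
    have hrow : 0 < ∑ j, klTerm (P i j) (Phat i j) :=
      sum_pos' (fun j _ => hnn i j) ⟨j, mem_univ j, klTerm_pos (hP' i j).1 (hpos i j) hij⟩
    have htot : 0 < ∑ i, m i * ∑ j, klTerm (P i j) (Phat i j) :=
      sum_pos' (fun i _ => mul_nonneg (hmpos i).le (sum_nonneg fun j _ => hnn i j))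
        ⟨i, mem_univ i, mul_pos (hmpos i) hrow⟩
    linarith
  refine ⟨hstoch, hIoo, fun P hP hP' => ?_, fun P hP hP' hmin => ?_⟩
  · rcases eq_or_ne P Phat with rfl | hne
    · exact le_rfl
    · exact (hlt P hP hP' hne).le
  · by_contra hne
    exact (hlt P hP hP' hne).not_ge (hmin Phat hstoch hIoo)
end
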